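/- arXiv:1903.03812 — 2 statements merged into one kernel-verified Lean document; each statement's English description precedes it below -/
import Mathlib

section
/- Let 0 < w ≤ w* and let Q' : S×A → ℝ be a fixed point of H_w (H_w Q' = Q'). Then for every Q : S×A → ℝ and every (i,a) ∈ S×A, |∑_{j∈S} p(j|i,a)·[w·(r̄(i,a,j) + α·max_{b∈A} Q(j,b) − Q'(i,a)) + (1−w)·(max_{c∈A} Q(i,c) − Q'(i,a))]| ≤ (w·α + 1 − w)·‖Q − Q'‖. -/
open Finset

/-- Maximum of a real-valued function over a nonempty finite type. -/
noncomputable def fmax {A : Type*} [Fintype A] [Nonempty A] (f : A → ℝ) : ℝ :=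
  Finset.univ.sup' Finset.univ_nonempty f

/-- Sup (maximum-absolute-value) norm of a real-valued function on a nonempty finite type. -/
noncomputable def supNorm {I : Type*} [Fintype I] [Nonempty I] (f : I → ℝ) : ℝ :=
  fmax (fun i => |f i|)

/-- The over-relaxation bound `w* = min_{(i,a)} 1/(1 - α p(i|i,a))`. -/
noncomputable def wstar {S A : Type*} [Fintype S] [Fintype A] [Nonempty S] [Nonempty A]
    (p : S → A → S → ℝ) (α : ℝ) : ℝ :=
  Finset.univ.inf' Finset.univ_nonempty (fun ia : S × A => 1 / (1 - α * p ia.1 ia.2 ia.1))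

/-- The SOR Q-Bellman operator `H_w`. -/
noncomputable def Hw {S A : Type*} [Fintype S] [Fintype A] [Nonempty S] [Nonempty A]
    (p : S → A → S → ℝ) (r : S → A → ℝ) (α w : ℝ) (Q : S → A → ℝ) : S → A → ℝ :=
  fun i a => w * (r i a + α * ∑ j, p i a j * fmax (Q j)) + (1 - w) * fmax (Q i)

/-!
Averaging over `j` turns the increment into `(H_w Q)(i,a) - Q'(i,a)`, which at a fixed point is
`(H_w Q - H_w Q')(i,a)`. The values `max_b Q(j,b)` enter `(H_w Q)(i,a)` with weights
`w α p(j|i,a) + (1 - w) δ_{ij}` of total mass `w α + 1 - w`. Only the weight at `j = i` can be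
negative, and `w ≤ w*` rules this out, so `H_w` is Lipschitz with constant the total mass because
`max_b` is `1`-Lipschitz.
-/

section Fmax

variable {ι : Type*} [Fintype ι] [Nonempty ι]

theorem le_fmax (f : ι → ℝ) (i : ι) : f i ≤ fmax f :=
  le_sup' f (mem_univ i)

theorem fmax_le_iff {f : ι → ℝ} {c : ℝ} : fmax f ≤ c ↔ ∀ i, f i ≤ c := by
  simp [fmax]

theorem abs_le_supNorm (f : ι → ℝ) (i : ι) : |f i| ≤ supNorm f :=
  le_fmax (fun i => |f i|) i

theorem fmax_le_fmax_add {f g : ι → ℝ} {c : ℝ} (h : ∀ i, f i ≤ g i + c) :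
    fmax f ≤ fmax g + c :=
  fmax_le_iff.2 fun i => (h i).trans (by gcongr; exact le_fmax g i)

theorem abs_fmax_sub_fmax_le {f g : ι → ℝ} {c : ℝ} (h : ∀ i, |f i - g i| ≤ c) :
    |fmax f - fmax g| ≤ c := by
  have hfg : fmax f ≤ fmax g + c :=
    fmax_le_fmax_add fun i => by linarith [(abs_le.1 (h i)).2]
  have hgf : fmax g ≤ fmax f + c :=
    fmax_le_fmax_add fun i => by linarith [(abs_le.1 (h i)).1]
  exact abs_sub_le_iff.2 ⟨by linarith, by linarith⟩

end Fmax

theorem abs_sum_mul_le_sum_mul {ι : Type*} {s : Finset ι} {q d : ι → ℝ} {c : ℝ}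
    (hq : ∀ i ∈ s, 0 ≤ q i) (hd : ∀ i ∈ s, |d i| ≤ c) :
    |∑ i ∈ s, q i * d i| ≤ (∑ i ∈ s, q i) * c :=
  calc |∑ i ∈ s, q i * d i|
      ≤ ∑ i ∈ s, |q i * d i| := abs_sum_le_sum_abs _ _
    _ ≤ ∑ i ∈ s, q i * c := sum_le_sum fun i hi => by
        rw [abs_mul, abs_of_nonneg (hq i hi)]
        exact mul_le_mul_of_nonneg_left (hd i hi) (hq i hi)
    _ = (∑ i ∈ s, q i) * c := (sum_mul ..).symm

/-- The weights `w α p(j|i,a) + (1 - w) δ_{ij}` with which the values `max_b Q(j,b)` enter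
`(H_w Q)(i,a)`. -/
noncomputable def sorWeight {S A : Type*} [DecidableEq S] (p : S → A → S → ℝ) (α w : ℝ)
    (i : S) (a : A) (j : S) : ℝ :=
  w * α * p i a j + if j = i then 1 - w else 0

theorem sum_sorWeight {S A : Type*} [Fintype S] [DecidableEq S] {p : S → A → S → ℝ} {i : S}
    {a : A} (hsum : ∑ j, p i a j = 1) (α w : ℝ) :
    ∑ j, sorWeight p α w i a j = w * α + 1 - w := by
  simp only [sorWeight, sum_add_distrib, ← mul_sum, hsum, sum_ite_eq', mem_univ, if_true]
  ring

section Hw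

variable {S A : Type*} [Fintype S] [Fintype A] [Nonempty S] [Nonempty A]
  {p : S → A → S → ℝ} {α w : ℝ} {i : S} {a : A}

theorem mul_one_sub_le_one_of_le_wstar (hw0 : 0 ≤ w) (hw : w ≤ wstar p α) (i : S) (a : A) :
    w * (1 - α * p i a i) ≤ 1 := by
  have hwi : w ≤ 1 / (1 - α * p i a i) :=
    hw.trans (inf'_le (fun ia : S × A => 1 / (1 - α * p ia.1 ia.2 ia.1)) (mem_univ (i, a)))
  rcases le_total 0 (1 - α * p i a i) with hnonneg | hnonpos
  · exact mul_le_of_le_div₀ zero_le_one hnonneg hwi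
  · exact (mul_nonpos_of_nonneg_of_nonpos hw0 hnonpos).trans zero_le_one

theorem sorWeight_nonneg [DecidableEq S] (hp : ∀ j, 0 ≤ p i a j) (hα : 0 ≤ α) (hw0 : 0 ≤ w)
    (hw : w ≤ wstar p α) (j : S) : 0 ≤ sorWeight p α w i a j := by
  rcases eq_or_ne j i with rfl | hji
  · simp only [sorWeight, if_true]
    linarith [mul_one_sub_le_one_of_le_wstar hw0 hw j a]
  · simp only [sorWeight, if_neg hji, add_zero]
    exact mul_nonneg (mul_nonneg hw0 hα) (hp j)

theorem Hw_eq_add_sum_sorWeight [DecidableEq S] (r Q : S → A → ℝ) :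
    Hw p r α w Q i a = w * r i a + ∑ j, sorWeight p α w i a j * fmax (Q j) := by
  simp only [Hw, sorWeight, add_mul, sum_add_distrib, mul_assoc, ← mul_sum, ite_mul, zero_mul,
    sum_ite_eq', mem_univ, if_true]
  ring

theorem abs_Hw_sub_Hw_le (hp : ∀ j, 0 ≤ p i a j) (hsum : ∑ j, p i a j = 1) (hα : 0 ≤ α)
    (hw0 : 0 ≤ w) (hw : w ≤ wstar p α) (r Q Q' : S → A → ℝ) :
    |Hw p r α w Q i a - Hw p r α w Q' i a| ≤
      (w * α + 1 - w) * supNorm (fun ia : S × A => Q ia.1 ia.2 - Q' ia.1 ia.2) := by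
  classical
  have hdiff : Hw p r α w Q i a - Hw p r α w Q' i a =
      ∑ j, sorWeight p α w i a j * (fmax (Q j) - fmax (Q' j)) := by
    simp only [Hw_eq_add_sum_sorWeight, mul_sub, sum_sub_distrib, add_sub_add_left_eq_sub]
  rw [hdiff, ← sum_sorWeight hsum]
  exact abs_sum_mul_le_sum_mul (fun j _ => sorWeight_nonneg hp hα hw0 hw j) fun j _ =>
    abs_fmax_sub_fmax_le fun b =>
      abs_le_supNorm (fun ia : S × A => Q ia.1 ia.2 - Q' ia.1 ia.2) (j, b)

theorem sum_mul_increment_eq_Hw_sub (hsum : ∑ j, p i a j = 1) (rb : S → A → S → ℝ)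
    (Q : S → A → ℝ) (x : ℝ) :
    ∑ j, p i a j * (w * (rb i a j + α * fmax (Q j) - x) + (1 - w) * (fmax (Q i) - x)) =
      Hw p (fun i a => ∑ j, p i a j * rb i a j) α w Q i a - x :=
  calc ∑ j, p i a j * (w * (rb i a j + α * fmax (Q j) - x) + (1 - w) * (fmax (Q i) - x))
      = ∑ j, (w * (p i a j * rb i a j + α * (p i a j * fmax (Q j))) +
          p i a j * ((1 - w) * fmax (Q i) - x)) := sum_congr rfl fun j _ => by ring
    _ = w * (∑ j, p i a j * rb i a j + α * ∑ j, p i a j * fmax (Q j)) +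
          (∑ j, p i a j) * ((1 - w) * fmax (Q i) - x) := by
        simp only [sum_add_distrib, ← mul_sum, ← sum_mul]
    _ = Hw p (fun i a => ∑ j, p i a j * rb i a j) α w Q i a - x := by
        rw [hsum, Hw]
        ring

end Hw

theorem expected_increment_bound_general {S A : Type*} [Fintype S] [Fintype A]
    [Nonempty S] [Nonempty A] {p : S → A → S → ℝ} {α w : ℝ}
    (hp : ∀ i a j, 0 ≤ p i a j) (hsum : ∀ i a, ∑ j, p i a j = 1) (hα : 0 ≤ α)
    (hw0 : 0 ≤ w) (hw : w ≤ wstar p α) (rb : S → A → S → ℝ) {Q' : S → A → ℝ}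
    (hQ' : Hw p (fun i a => ∑ j, p i a j * rb i a j) α w Q' = Q')
    (Q : S → A → ℝ) (i : S) (a : A) :
    |∑ j, p i a j *
        (w * (rb i a j + α * fmax (Q j) - Q' i a) + (1 - w) * (fmax (Q i) - Q' i a))| ≤
      (w * α + 1 - w) * supNorm (fun ia : S × A => Q ia.1 ia.2 - Q' ia.1 ia.2) := by
  have hfix : Hw p (fun i a => ∑ j, p i a j * rb i a j) α w Q' i a = Q' i a :=
    congrFun₂ hQ' i a
  rw [sum_mul_increment_eq_Hw_sub (hsum i a), ← hfix]
  exact abs_Hw_sub_Hw_le (hp i a) (hsum i a) hα hw0 hw _ Q Q'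

/-- If `0 < w ≤ w*` and `Q'` is a fixed point of `H_w`, then the expected SOR Q-learning
increment is bounded by the contraction factor times the sup-norm distance to `Q'`. -/
theorem expected_increment_bound {S A : Type*} [Fintype S] [Fintype A]
    [Nonempty S] [Nonempty A]
    (p : S → A → S → ℝ) (rb : S → A → S → ℝ) (α : ℝ)
    (hp : ∀ i a j, 0 ≤ p i a j) (hsum : ∀ i a, ∑ j, p i a j = 1)
    (hα0 : 0 ≤ α) (hα1 : α < 1)
    (w : ℝ) (hw0 : 0 < w) (hw : w ≤ wstar p α)
    (Q' : S → A → ℝ) (hQ' : Hw p (fun i a => ∑ j, p i a j * rb i a j) α w Q' = Q') :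
    ∀ (Q : S → A → ℝ) (i : S) (a : A),
      |∑ j, p i a j *
          (w * (rb i a j + α * fmax (Q j) - Q' i a) + (1 - w) * (fmax (Q i) - Q' i a))| ≤
        (w * α + 1 - w) * supNorm (fun ia : S × A => Q ia.1 ia.2 - Q' ia.1 ia.2) :=
  expected_increment_bound_general hp hsum hα0 hw0.le hw rb hQ'
end

section
/- Suppose |r̄(i,a,j)| ≤ B for all (i,a,j). Then for every w ∈ ℝ, every Q : S×A → ℝ and every (i,a) ∈ S×A, the conditional second moment of the SOR Q-learning noise is bounded: ∑_{j∈S} p(j|i,a)·(w·(r̄(i,a,j) + α·max_{b∈A} Q(j,b)) + (1−w)·max_{c∈A} Q(i,c) − (H_w Q)(i,a))² ≤ 3·(w²·B² + α²·w²·‖Q‖² + (1−w)²·‖Q‖²). -/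
open Finset

/-!
Subtracting `H_w Q` cancels the over-relaxation term `(1 - w) * max_c Q(i, c)`, so the noise is
`w` times the deviation of the sampled target `r̄(i, a, j) + α * max_b Q(j, b)` from its mean
under `p(· | i, a)`. Its second moment is therefore `w ^ 2` times a variance, and a variance is
at most the square of any bound on the absolute value of the variable.
-/

section WeightedVariance

variable {ι R : Type*} [CommRing R] {s : Finset ι} {p : ι → R}

theorem sum_mul_sub_mean_sq (hsum : ∑ j ∈ s, p j = 1) (x : ι → R) :
    ∑ j ∈ s, p j * (x j - ∑ k ∈ s, p k * x k) ^ 2 =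
      ∑ j ∈ s, p j * x j ^ 2 - (∑ k ∈ s, p k * x k) ^ 2 := by
  set m := ∑ k ∈ s, p k * x k with hm
  calc
    ∑ j ∈ s, p j * (x j - m) ^ 2
        = ∑ j ∈ s, (p j * x j ^ 2 - 2 * m * (p j * x j) + m ^ 2 * p j) :=
      sum_congr rfl fun j _ => by ring
    _ = ∑ j ∈ s, p j * x j ^ 2 - 2 * m * m + m ^ 2 * 1 := by
      rw [sum_add_distrib, sum_sub_distrib, ← mul_sum, ← mul_sum, ← hm, hsum]
    _ = ∑ j ∈ s, p j * x j ^ 2 - m ^ 2 := by ring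

variable [LinearOrder R] [IsStrictOrderedRing R]

theorem sum_mul_sub_mean_sq_le_of_abs_le (hp : ∀ j ∈ s, 0 ≤ p j) (hsum : ∑ j ∈ s, p j = 1)
    {x : ι → R} {C : R} (hx : ∀ j ∈ s, |x j| ≤ C) :
    ∑ j ∈ s, p j * (x j - ∑ k ∈ s, p k * x k) ^ 2 ≤ C ^ 2 :=
  calc
    ∑ j ∈ s, p j * (x j - ∑ k ∈ s, p k * x k) ^ 2
        = ∑ j ∈ s, p j * x j ^ 2 - (∑ k ∈ s, p k * x k) ^ 2 := sum_mul_sub_mean_sq hsum x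
    _ ≤ ∑ j ∈ s, p j * x j ^ 2 := sub_le_self _ (sq_nonneg _)
    _ ≤ ∑ j ∈ s, p j * C ^ 2 := sum_le_sum fun j hj =>
      mul_le_mul_of_nonneg_left (sq_le_sq.2 ((hx j hj).trans (le_abs_self C))) (hp j hj)
    _ = C ^ 2 := by rw [← sum_mul, hsum, one_mul]

end WeightedVariance

theorem exists_fmax_eq {A : Type*} [Fintype A] [Nonempty A] (f : A → ℝ) : ∃ a, fmax f = f a :=
  let ⟨a, _, ha⟩ := exists_mem_eq_sup' univ_nonempty f
  ⟨a, ha⟩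

theorem abs_le_supNorm_s16 {I : Type*} [Fintype I] [Nonempty I] (f : I → ℝ) (i : I) :
    |f i| ≤ supNorm f :=
  le_sup' (fun i => |f i|) (mem_univ i)

section SORNoise

variable {S A : Type*} [Fintype A] [Nonempty A]

/-- The sampled Q-learning target `r̄(i, a, j) + α * max_b Q(j, b)` for a transition from `i` to `j`
under the action `a`; its mean over `j` is the usual Q-Bellman update of `Q` at `(i, a)`. -/
noncomputable def bellmanTarget (rb : S → A → S → ℝ) (α : ℝ) (Q : S → A → ℝ) (i : S) (a : A)
    (j : S) : ℝ :=
  rb i a j + α * fmax (Q j)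

variable [Fintype S] [Nonempty S]

theorem abs_fmax_apply_le_supNorm (Q : S → A → ℝ) (j : S) :
    |fmax (Q j)| ≤ supNorm (fun ia : S × A => Q ia.1 ia.2) := by
  obtain ⟨b, hb⟩ := exists_fmax_eq (Q j)
  rw [hb]
  exact abs_le_supNorm_s16 (fun ia : S × A => Q ia.1 ia.2) (j, b)

theorem abs_bellmanTarget_le {rb : S → A → S → ℝ} {B : ℝ} {i j : S} {a : A}
    (hr : |rb i a j| ≤ B) (α : ℝ) (Q : S → A → ℝ) :
    |bellmanTarget rb α Q i a j| ≤ B + |α| * supNorm (fun ia : S × A => Q ia.1 ia.2) :=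
  calc
    |rb i a j + α * fmax (Q j)| ≤ |rb i a j| + |α| * |fmax (Q j)| := by
      rw [← abs_mul]
      exact abs_add_le _ _
    _ ≤ B + |α| * supNorm (fun ia : S × A => Q ia.1 ia.2) := by
      gcongr
      exact abs_fmax_apply_le_supNorm Q j

theorem Hw_eq_mean_bellmanTarget (p rb : S → A → S → ℝ) (α w : ℝ) (Q : S → A → ℝ) (i : S) (a : A) :
    Hw p (fun i a => ∑ j, p i a j * rb i a j) α w Q i a =
      w * ∑ j, p i a j * bellmanTarget rb α Q i a j + (1 - w) * fmax (Q i) := by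
  simp only [Hw, bellmanTarget, mul_add, sum_add_distrib, mul_sum, mul_left_comm α]

theorem noise_second_moment_bound_general (p rb : S → A → S → ℝ) (α : ℝ) {B : ℝ} {i : S} {a : A}
    (hp : ∀ j, 0 ≤ p i a j) (hsum : ∑ j, p i a j = 1) (hr : ∀ j, |rb i a j| ≤ B)
    (w : ℝ) (Q : S → A → ℝ) :
    ∑ j, p i a j *
        (w * (rb i a j + α * fmax (Q j)) + (1 - w) * fmax (Q i) -
          Hw p (fun i a => ∑ j, p i a j * rb i a j) α w Q i a) ^ 2 ≤
      w ^ 2 * (B + |α| * supNorm (fun ia : S × A => Q ia.1 ia.2)) ^ 2 := by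
  let target := bellmanTarget rb α Q i a
  calc
    _ = ∑ j, w ^ 2 * (p i a j * (target j - ∑ k, p i a k * target k) ^ 2) :=
      sum_congr rfl fun j _ => by
        rw [Hw_eq_mean_bellmanTarget]
        change p i a j * (w * target j + _ - (w * ∑ k, p i a k * target k + _)) ^ 2 = _
        ring
    _ = w ^ 2 * ∑ j, p i a j * (target j - ∑ k, p i a k * target k) ^ 2 := (mul_sum ..).symm
    _ ≤ w ^ 2 * (B + |α| * supNorm (fun ia : S × A => Q ia.1 ia.2)) ^ 2 := by
      gcongr
      exact sum_mul_sub_mean_sq_le_of_abs_le (fun j _ => hp j) hsum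
        fun j _ => abs_bellmanTarget_le (hr j) α Q

end SORNoise

theorem sq_mul_add_abs_mul_sq_le (w B α N : ℝ) :
    w ^ 2 * (B + |α| * N) ^ 2 ≤
      3 * (w ^ 2 * B ^ 2 + α ^ 2 * w ^ 2 * N ^ 2 + (1 - w) ^ 2 * N ^ 2) :=
  calc
    w ^ 2 * (B + |α| * N) ^ 2 ≤ w ^ 2 * (2 * (B ^ 2 + (|α| * N) ^ 2)) := by
      gcongr
      exact add_sq_le
    _ = 2 * (w ^ 2 * B ^ 2 + α ^ 2 * w ^ 2 * N ^ 2) := by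
      rw [mul_pow, sq_abs]
      ring
    _ ≤ 3 * (w ^ 2 * B ^ 2 + α ^ 2 * w ^ 2 * N ^ 2 + (1 - w) ^ 2 * N ^ 2) := by
      refine mul_le_mul (by norm_num) (le_add_of_nonneg_right ?_) ?_ (by norm_num) <;> positivity

/-- Conditional second moment bound for the SOR Q-learning noise. -/
theorem noise_second_moment_bound {S A : Type*} [Fintype S] [Fintype A]
    [Nonempty S] [Nonempty A]
    (p : S → A → S → ℝ) (rb : S → A → S → ℝ) (α B : ℝ)
    (hp : ∀ i a j, 0 ≤ p i a j) (hsum : ∀ i a, ∑ j, p i a j = 1)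
    (hα0 : 0 ≤ α) (hα1 : α < 1)
    (hB : 0 ≤ B) (hr : ∀ i a j, |rb i a j| ≤ B) :
    ∀ (w : ℝ) (Q : S → A → ℝ) (i : S) (a : A),
      ∑ j, p i a j *
          (w * (rb i a j + α * fmax (Q j)) + (1 - w) * fmax (Q i) -
            Hw p (fun i a => ∑ j, p i a j * rb i a j) α w Q i a) ^ 2 ≤
        3 * (w ^ 2 * B ^ 2 + α ^ 2 * w ^ 2 * (supNorm (fun ia : S × A => Q ia.1 ia.2)) ^ 2 +
          (1 - w) ^ 2 * (supNorm (fun ia : S × A => Q ia.1 ia.2)) ^ 2) := fun w Q i a =>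
  (noise_second_moment_bound_general p rb α (hp i a) (hsum i a) (hr i a) w Q).trans
    (sq_mul_add_abs_mul_sq_le w B α _)
end
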